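/- Let U be a D×D unitary complex matrix whose spectrum consists of exactly d ≥ 2 distinct eigenvalues e^{iφ_1}, …, e^{iφ_d} with each φ_k ∈ [0, 2π). Then for every ε with 0 < ε ≤ 1/2 there exists a positive integer m_r with m_r ≤ (π / max_{j,k} R(φ_j, φ_k)) · (1/d) · (2⌈π/ε⌉ + 2)^(d−1) such that: (i) for every unit vector ψ ∈ ℂ^D, 1 − |⟨ψ, U^{m_r} ψ⟩|² ≤ ε², and (ii) there exist a unit vector φ ∈ ℂ^D and a positive integer m′ ≤ m_r such that 1 − |⟨φ, U^{m′} φ⟩|² > ε². -/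

import Mathlib

open Matrix Real

/-!
The infidelity of `ψ` under `U ^ n` is small as soon as the eigenvalues of `U ^ n` lie in a short
arc, wherever that arc is: for a normal operator, a half-plane containing the spectrum contains the
numerical range. So one only needs the phases `n • φ k` to be simultaneously close to a *common*
value, which is a Dirichlet approximation problem on the torus modulo its diagonal. Cutting each
circle into `b` cells, the diagonal orbit of a point climbs a staircase through `d` different
cubes modulo the diagonal. Each time thus occupies `d` of the `b ^ (d - 1)` classes of cubes, and
the pigeonhole principle yields a recurrence after at most `b ^ (d - 1) / d` steps.

To guarantee an earlier escape, this is applied to `U ^ M`, where `M` is the largest integer for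
which the largest phase gap `Δ` satisfies `M * Δ ≤ π`. Then `M * Δ > π / 2`, so the balanced
superposition of the two corresponding eigenvectors has infidelity above `1 / 2` at time `M`.
-/

open scoped InnerProductSpace ComplexStarModule

section Angles

theorem norm_coe_addCircle_eq_min {p x : ℝ} (hx : |x| ≤ p) :
    ‖(x : AddCircle p)‖ = min |x| (p - |x|) := by
  rcases ((abs_nonneg x).trans hx).eq_or_lt with rfl | hp
  · simp [abs_nonpos_iff.1 hx]
  wlog hx0 : 0 ≤ x generalizing x
  · simpa using @this (-x) (by simpa) (by linarith)
  rw [abs_of_nonneg hx0] at hx ⊢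
  rcases le_total x (p / 2) with h | h
  · rw [min_eq_left (by linarith), (AddCircle.norm_coe_eq_abs_iff p hp.ne').2, abs_of_nonneg hx0]
    rwa [abs_of_nonneg hx0, abs_of_pos hp]
  · have hcoe : (x : AddCircle p) = -((p - x : ℝ) : AddCircle p) := by
      rw [AddCircle.coe_sub, AddCircle.coe_period, zero_sub, neg_neg]
    have hpx : |p - x| = p - x := abs_of_nonneg (by linarith)
    rw [min_eq_right (by linarith), hcoe, norm_neg, (AddCircle.norm_coe_eq_abs_iff p hp.ne').2, hpx]
    rw [hpx, abs_of_pos hp]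
    linarith

theorem injOn_coe_angle_Ico : Set.InjOn ((↑) : ℝ → Real.Angle) (Set.Ico 0 (2 * π)) := by
  have : Fact (0 < 2 * π) := ⟨two_pi_pos⟩
  intro x hx y hy h
  exact (AddCircle.coe_eq_coe_iff_of_mem_Ico (a := 0) (by simpa using hx) (by simpa using hy)).1 h

theorem norm_coe_angle_sub_eq_min {x y : ℝ} (hx : x ∈ Set.Ico 0 (2 * π))
    (hy : y ∈ Set.Ico 0 (2 * π)) :
    ‖(x - y : Real.Angle)‖ = min |x - y| (2 * π - |x - y|) := by
  rw [← Real.Angle.coe_sub]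
  exact norm_coe_addCircle_eq_min
    (abs_le.2 ⟨by linarith [hx.1, hy.2], by linarith [hx.2, hy.1]⟩)

theorem norm_angle_le_pi (θ : Real.Angle) : ‖θ‖ ≤ π := by
  have h := AddCircle.norm_le_half_period (2 * π) (x := θ) two_pi_pos.ne'
  rwa [abs_of_pos two_pi_pos, mul_div_cancel_left₀ π two_ne_zero] at h

theorem cos_nsmul_eq_cos_mul_norm (n : ℕ) (θ : Real.Angle) :
    (n • θ).cos = Real.cos (n * ‖θ‖) := by
  induction θ using Real.Angle.induction_on with
  | _ x =>
    set y := x - round ((2 * π)⁻¹ * x) * (2 * π) with hy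
    have hcoe : (x : Real.Angle) = y := by simp [hy]
    have hnorm : ‖(x : Real.Angle)‖ = |y| := AddCircle.norm_eq (p := 2 * π)
    rw [hnorm, hcoe, ← Real.Angle.coe_nsmul, Real.Angle.cos_coe, nsmul_eq_mul, ← Real.cos_abs,
      abs_mul, Nat.abs_cast]

theorem cos_angle_eq_cos_norm (θ : Real.Angle) : θ.cos = Real.cos ‖θ‖ := by
  simpa using cos_nsmul_eq_cos_mul_norm 1 θ

theorem exp_I_mul_eq_toCircle (x : ℝ) :
    Complex.exp (Complex.I * x) = ((x : Real.Angle).toCircle : ℂ) := by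
  rw [Real.Angle.toCircle_coe, Circle.coe_exp, mul_comm]

theorem toCircle_nsmul_angle (n : ℕ) (θ : Real.Angle) :
    (n • θ).toCircle = θ.toCircle ^ n := by
  induction n with
  | zero => simp
  | succ n ih => rw [succ_nsmul, Real.Angle.toCircle_add, ih, pow_succ]

theorem toCircle_angle_injective : Function.Injective Real.Angle.toCircle :=
  Function.LeftInverse.injective (g := fun z : Circle => (Complex.arg z : Real.Angle))
    Real.Angle.arg_toCircle

theorem sq_norm_toCircle_add_toCircle_div_two (α β : Real.Angle) :
    ‖(α.toCircle + β.toCircle : ℂ) / 2‖ ^ 2 = (1 + (α - β).cos) / 2 := by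
  have hre : ((α.toCircle + β.toCircle : ℂ) / 2).re = (α.cos + β.cos) / 2 := by
    simp [Real.Angle.coe_toCircle]
  have him : ((α.toCircle + β.toCircle : ℂ) / 2).im = (α.sin + β.sin) / 2 := by
    simp [Real.Angle.coe_toCircle]
  rw [Complex.sq_norm, Complex.normSq_apply, hre, him, sub_eq_add_neg, Real.Angle.cos_add,
    Real.Angle.cos_neg, Real.Angle.sin_neg]
  linear_combination (1 / 4) * α.cos_sq_add_sin_sq + (1 / 4) * β.cos_sq_add_sin_sq

end Angles

section Staircase

variable {κ : Type*} [LinearOrder κ]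

/-- The `i`-th coordinate of the upper corner of the unit cell containing the diagonal translate
`x - Int.fract (x j) • 1`. As `j` varies, these are the cells met by the line `x + ℝ • 1`, up to
translation by `1`; equal fractional parts are ordered by index, so that distinct `j` always give
distinct cells. -/
noncomputable def staircaseCell (x : κ → ℝ) (j i : κ) : ℤ :=
  ⌊x i⌋ + if toLex (Int.fract (x j), j) ≤ toLex (Int.fract (x i), i) then 1 else 0

theorem sub_fract_sub_staircaseCell_mem_Icc (x : κ → ℝ) (j i : κ) :
    x i - Int.fract (x j) - staircaseCell x j i ∈ Set.Icc (-1) 0 := by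
  have hfloor := Int.self_sub_floor (x i)
  have hi := Int.fract_lt_one (x i)
  have hj := Int.fract_nonneg (x j)
  have hi' := Int.fract_nonneg (x i)
  have hj' := Int.fract_lt_one (x j)
  unfold staircaseCell
  split_ifs with h
  · have hle : Int.fract (x j) ≤ Int.fract (x i) := Prod.Lex.monotone_fst _ _ h
    push_cast
    constructor <;> linarith
  · have hle : Int.fract (x i) ≤ Int.fract (x j) := Prod.Lex.monotone_fst _ _ (le_of_not_ge h)
    push_cast
    constructor <;> linarith

theorem eq_of_staircaseCell_sub_modEq {b : ℕ} (hb : 2 ≤ b) (x : κ → ℝ) {i₀ j k : κ}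
    (h : ∀ i, staircaseCell x j i - staircaseCell x j i₀ ≡
      staircaseCell x k i - staircaseCell x k i₀ [ZMOD b]) : j = k := by
  wlog hjk : toLex (Int.fract (x j), j) ≤ toLex (Int.fract (x k), k) generalizing j k
  · exact (this (fun i => (h i).symm) (le_of_not_ge hjk)).symm
  by_contra hne
  have hkj : ¬ toLex (Int.fract (x k), k) ≤ toLex (Int.fract (x j), j) := fun hkj =>
    hne (congrArg (fun p => (ofLex p).2) (le_antisymm hjk hkj))
  have hsub := (h j).sub (h k)
  simp only [staircaseCell, le_refl, hjk, hkj, if_true, if_false] at hsub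
  have hdvd : (b : ℤ) ∣ -1 := by
    convert hsub.dvd using 1
    ring
  have hle := Int.le_of_dvd one_pos (Int.dvd_neg.1 hdvd)
  lia

theorem exists_lt_staircaseCell_sub_modEq [Fintype κ] {b : ℕ} (hb : 2 ≤ b) (x : ℕ → κ → ℝ)
    (i₀ : κ) : ∃ s t, s < t ∧ t * Fintype.card κ ≤ b ^ (Fintype.card κ - 1) ∧ ∃ j k, ∀ i,
      staircaseCell (x s) j i - staircaseCell (x s) j i₀ ≡
        staircaseCell (x t) k i - staircaseCell (x t) k i₀ [ZMOD b] := by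
  have : NeZero b := ⟨by omega⟩
  have hκ : 0 < Fintype.card κ := Fintype.card_pos_iff.2 ⟨i₀⟩
  set N := b ^ (Fintype.card κ - 1) / Fintype.card κ
  have hbound (t : Fin (N + 1)) : t * Fintype.card κ ≤ b ^ (Fintype.card κ - 1) :=
    (Nat.mul_le_mul_right _ t.is_le).trans (Nat.div_mul_le_self _ _)
  let offsets : Fin (N + 1) × κ → {i // i ≠ i₀} → ZMod b := fun p i =>
    ((staircaseCell (x p.1) p.2 i - staircaseCell (x p.1) p.2 i₀ : ℤ) : ZMod b)
  have hcard : Fintype.card ({i // i ≠ i₀} → ZMod b) < Fintype.card (Fin (N + 1) × κ) := by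
    simpa [ZMod.card, mul_comm, Fintype.card_subtype_compl] using
      Nat.lt_mul_div_succ (b ^ (Fintype.card κ - 1)) hκ
  obtain ⟨⟨s, j⟩, ⟨t, k⟩, hne, heq⟩ := Fintype.exists_ne_map_eq_of_card_lt offsets hcard
  have hmod (i : κ) : staircaseCell (x s) j i - staircaseCell (x s) j i₀ ≡
      staircaseCell (x t) k i - staircaseCell (x t) k i₀ [ZMOD b] := by
    rcases eq_or_ne i i₀ with rfl | hi
    · simp only [sub_self, Int.ModEq.refl]
    · exact (ZMod.intCast_eq_intCast_iff _ _ b).1 (congrFun heq ⟨i, hi⟩)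
  rcases lt_trichotomy s t with hst | rfl | hts
  · exact ⟨s, t, hst, hbound t, j, k, hmod⟩
  · exact absurd (congrArg (Prod.mk s) (eq_of_staircaseCell_sub_modEq hb _ hmod)) hne
  · exact ⟨t, s, hts, hbound s, k, j, fun i => (hmod i).symm⟩

end Staircase

section Dirichlet

variable {κ : Type*} [Fintype κ] [Nonempty κ] {b : ℕ}

theorem exists_lt_abs_sub_sub_sub_le_one (hb : 2 ≤ b) (x : ℕ → κ → ℝ) :
    ∃ s t, s < t ∧ t * Fintype.card κ ≤ b ^ (Fintype.card κ - 1) ∧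
      ∃ (τ : ℝ) (z : κ → ℤ), ∀ i, |x t i - x s i - τ - b * z i| ≤ 1 := by
  let : LinearOrder κ := LinearOrder.lift' (Fintype.equivFin κ) (Equiv.injective _)
  obtain ⟨i₀⟩ := ‹Nonempty κ›
  obtain ⟨s, t, hst, hbound, j, k, hmod⟩ := exists_lt_staircaseCell_sub_modEq hb x i₀
  choose z hz using fun i => (hmod i).dvd
  refine ⟨s, t, hst, hbound, Int.fract (x t k) - Int.fract (x s j) +
    (staircaseCell (x t) k i₀ - staircaseCell (x s) j i₀), z, fun i => ?_⟩
  have hz' : (staircaseCell (x t) k i - staircaseCell (x t) k i₀ -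
      (staircaseCell (x s) j i - staircaseCell (x s) j i₀) : ℝ) = b * z i := mod_cast hz i
  obtain ⟨hs, hs'⟩ := sub_fract_sub_staircaseCell_mem_Icc (x s) j i
  obtain ⟨ht, ht'⟩ := sub_fract_sub_staircaseCell_mem_Icc (x t) k i
  rw [abs_le]
  constructor <;> linarith

theorem exists_lt_norm_sub_sub_le {p : ℝ} (hp : 0 < p) (hb : 2 ≤ b) (ξ : ℕ → κ → AddCircle p) :
    ∃ s t, s < t ∧ t * Fintype.card κ ≤ b ^ (Fintype.card κ - 1) ∧
      ∃ τ, ∀ k, ‖ξ t k - ξ s k - τ‖ ≤ p / b := by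
  have hb0 : (0 : ℝ) < b := by positivity
  choose y hy using fun t k => QuotientAddGroup.mk_surjective (ξ t k)
  obtain ⟨s, t, hst, hbound, τ, z, hz⟩ :=
    exists_lt_abs_sub_sub_sub_le_one hb fun t k => y t k * (b / p)
  refine ⟨s, t, hst, hbound, (τ * (p / b) : ℝ), fun k => ?_⟩
  have hlift : ξ t k - ξ s k - (τ * (p / b) : ℝ) =
      ((y t k - y s k - τ * (p / b) - z k * p : ℝ) : AddCircle p) := by
    rw [← hy, ← hy, AddCircle.coe_sub, AddCircle.coe_sub, AddCircle.coe_sub, ← zsmul_eq_mul,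
      AddCircle.coe_zsmul, AddCircle.coe_period, smul_zero, sub_zero]
  calc ‖ξ t k - ξ s k - (τ * (p / b) : ℝ)‖
      ≤ |y t k - y s k - τ * (p / b) - z k * p| := hlift ▸ QuotientAddGroup.norm_mk_le_norm
    _ = |y t k * (b / p) - y s k * (b / p) - τ - b * z k| * (p / b) := by
        rw [← abs_of_pos (div_pos hp hb0), ← abs_mul, abs_of_pos (div_pos hp hb0)]
        congr 1
        field_simp
    _ ≤ p / b := mul_le_of_le_one_left (by positivity) (hz k)

theorem exists_norm_nsmul_sub_le {p : ℝ} (hp : 0 < p) (hb : 2 ≤ b) (ξ : κ → AddCircle p) :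
    ∃ m, 0 < m ∧ m * Fintype.card κ ≤ b ^ (Fintype.card κ - 1) ∧
      ∃ τ, ∀ k, ‖m • ξ k - τ‖ ≤ p / b := by
  obtain ⟨s, t, hst, hbound, τ, hτ⟩ := exists_lt_norm_sub_sub_le hp hb fun t k => t • ξ k
  refine ⟨t - s, Nat.sub_pos_of_lt hst,
    (Nat.mul_le_mul_right _ (Nat.sub_le t s)).trans hbound, τ, fun k => ?_⟩
  rw [sub_nsmul _ hst.le, ← sub_eq_add_neg]
  exact hτ k

theorem exists_norm_nsmul_angle_sub_le {ε : ℝ} (hε : 0 < ε) (θ : κ → Real.Angle) :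
    ∃ m : ℕ, 0 < m ∧
      (m : ℝ) ≤ 1 / Fintype.card κ * (2 * ⌈π / ε⌉ + 2 : ℝ) ^ (Fintype.card κ - 1) ∧
      ∃ τ, ∀ k, ‖m • θ k - τ‖ ≤ ε := by
  set q := ⌈π / ε⌉₊ + 1
  have hq : (2 * ⌈π / ε⌉ + 2 : ℝ) = (2 * q : ℕ) := by
    rw [← natCast_ceil_eq_intCast_ceil (by positivity)]
    push_cast [q]
    ring
  obtain ⟨m, hm, hcard, τ, hτ⟩ :=
    exists_norm_nsmul_sub_le two_pi_pos (b := 2 * q) (by lia) θ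
  refine ⟨m, hm, ?_, τ, fun k => (hτ k).trans ?_⟩
  · rw [hq, one_div_mul_eq_div, le_div_iff₀ (by exact_mod_cast Fintype.card_pos)]
    exact_mod_cast hcard
  · have hπ : π / ε ≤ q := (Nat.le_ceil _).trans (by simp [q])
    rw [Nat.cast_mul, Nat.cast_ofNat, mul_div_mul_left _ _ two_ne_zero]
    exact div_le_of_le_mul₀ (by positivity) hε.le (by rwa [mul_comm, ← div_le_iff₀ hε])

end Dirichlet

section NormalOperators

theorem pow_apply_of_apply_eq_smul {R E : Type*} [CommSemiring R] [AddCommMonoid E] [Module R E]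
    [TopologicalSpace E] {T : E →L[R] E} {z : R} {v : E} (hv : T v = z • v) (n : ℕ) :
    (T ^ n) v = z ^ n • v := by
  induction n with
  | zero => simp
  | succ n ih => rw [pow_succ', mul_apply_eq_comp, ih, map_smul, hv, smul_smul, pow_succ]

variable {H : Type*} [NormedAddCommGroup H] [InnerProductSpace ℂ H] [CompleteSpace H]
  {T : H →L[ℂ] H} [IsStarNormal T]

theorem le_re_inner_of_le_re_spectrum {c : ℝ} (h : ∀ z ∈ spectrum ℂ T, c ≤ z.re) {ψ : H}
    (hψ : ‖ψ‖ = 1) : c ≤ (⟪ψ, T ψ⟫_ℂ).re := by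
  have hle : algebraMap ℝ (H →L[ℂ] H) c ≤ (ℜ T : H →L[ℂ] H) := by
    rw [algebraMap_le_iff_le_spectrum (ha := (ℜ T).2), spectrum_realPart' T]
    rintro _ ⟨z, hz, rfl⟩
    exact h z hz
  have hre : (⟪ψ, (ℜ T : H →L[ℂ] H) ψ⟫_ℂ).re = (⟪ψ, T ψ⟫_ℂ).re := by
    have hsymm : (⟪T ψ, ψ⟫_ℂ).re = (⟪ψ, T ψ⟫_ℂ).re := inner_re_symm (𝕜 := ℂ) _ _
    rw [realPart_apply_coe, ContinuousLinearMap.star_eq_adjoint, _root_.smul_apply,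
      _root_.add_apply, inner_smul_right_eq_smul, inner_add_right,
      ContinuousLinearMap.adjoint_inner_right, Complex.smul_re, Complex.add_re, hsymm,
      smul_eq_mul]
    ring
  have hc : ⟪ψ, algebraMap ℝ (H →L[ℂ] H) c ψ⟫_ℂ = c := by
    simp [Algebra.algebraMap_eq_smul_one, hψ]
  have hpos := ((ContinuousLinearMap.le_def _ _).1 hle).re_inner_nonneg_right ψ
  rw [_root_.sub_apply, inner_sub_right, hc] at hpos
  simpa [hre] using hpos

theorem cos_le_norm_inner_of_spectrum_subset_arc {τ : Real.Angle} {δ : ℝ} (hδ : δ ≤ π)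
    (h : ∀ z ∈ spectrum ℂ T, ∃ θ : Real.Angle, ‖θ - τ‖ ≤ δ ∧ θ.toCircle = z) {ψ : H}
    (hψ : ‖ψ‖ = 1) : Real.cos δ ≤ ‖⟪ψ, T ψ⟫_ℂ‖ := by
  let u := Circle.toUnits (-τ).toCircle
  have hu (z : ℂ) : u • z = (-τ).toCircle * z := rfl
  have hre : ∀ z ∈ spectrum ℂ (u • T), Real.cos δ ≤ z.re := by
    rw [spectrum.unit_smul_eq_smul]
    rintro _ ⟨z, hz, rfl⟩
    obtain ⟨θ, hθ, rfl⟩ := h z hz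
    have hθre : (u • (θ.toCircle : ℂ)).re = Real.cos ‖θ - τ‖ := by
      rw [hu, mul_comm, ← Circle.coe_mul, ← Real.Angle.toCircle_add, ← sub_eq_add_neg,
        Real.Angle.coe_toCircle, ← cos_angle_eq_cos_norm]
      simp
    exact (Real.cos_le_cos_of_nonneg_of_le_pi (norm_nonneg _) hδ hθ).trans_eq hθre.symm
  have : IsStarNormal (u • T) := inferInstanceAs (IsStarNormal ((u : ℂ) • T))
  calc Real.cos δ ≤ (⟪ψ, (u • T) ψ⟫_ℂ).re := le_re_inner_of_le_re_spectrum hre hψ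
    _ ≤ ‖⟪ψ, (u • T) ψ⟫_ℂ‖ := Complex.re_le_norm _
    _ = ‖⟪ψ, T ψ⟫_ℂ‖ := by
      change ‖⟪ψ, ((-τ).toCircle : ℂ) • T ψ⟫_ℂ‖ = _
      rw [inner_smul_right, norm_mul, Circle.norm_coe, one_mul]

theorem one_sub_sq_norm_inner_le_sq_of_spectrum_subset_arc {τ : Real.Angle} {δ : ℝ}
    (hδ0 : 0 ≤ δ) (hδ : δ ≤ π / 2)
    (h : ∀ z ∈ spectrum ℂ T, ∃ θ : Real.Angle, ‖θ - τ‖ ≤ δ ∧ θ.toCircle = z) {ψ : H}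
    (hψ : ‖ψ‖ = 1) : 1 - ‖⟪ψ, T ψ⟫_ℂ‖ ^ 2 ≤ δ ^ 2 := by
  have hcos0 : 0 ≤ Real.cos δ := Real.cos_nonneg_of_mem_Icc ⟨by linarith, hδ⟩
  have hcos := cos_le_norm_inner_of_spectrum_subset_arc (by linarith) h hψ
  calc 1 - ‖⟪ψ, T ψ⟫_ℂ‖ ^ 2 ≤ 1 - Real.cos δ ^ 2 := by gcongr
    _ = Real.sin δ ^ 2 := (Real.sin_sq δ).symm
    _ ≤ δ ^ 2 := Real.sin_sq_le_sq

theorem exists_unit_eigenvector (hT : (spectrum ℂ T).Finite) {z : ℂ}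
    (hz : z ∈ spectrum ℂ T) : ∃ v : H, ‖v‖ = 1 ∧ T v = z • v := by
  classical
  have hcont (f : ℂ → ℂ) : ContinuousOn f (spectrum ℂ T) := hT.continuousOn f
  let χ : ℂ → ℂ := Pi.single z 1
  have hne : cfc χ T ≠ 0 := fun h0 => by
    have hEq := eqOn_of_cfc_eq_cfc (h0.trans (cfc_zero ℂ T).symm) (hcont _) (hcont _)
    simpa [χ] using hEq hz
  have hmul : T * cfc χ T = z • cfc χ T := by
    calc T * cfc χ T = cfc (fun x => x * χ x) T := by
          rw [cfc_mul _ _ T (hcont _) (hcont _), cfc_id' ℂ T]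
      _ = cfc (fun x => z * χ x) T := cfc_congr fun x _ => by
          by_cases hx : x = z <;> simp [χ, hx]
      _ = z • cfc χ T := cfc_const_mul z χ T (hcont _)
  obtain ⟨w, hw⟩ := DFunLike.ne_iff.1 hne
  refine ⟨(‖cfc χ T w‖⁻¹ : ℂ) • cfc χ T w, norm_smul_inv_norm hw, ?_⟩
  rw [map_smul, smul_comm]
  exact congrArg _ (DFunLike.congr_fun hmul w)

theorem inner_eq_zero_of_apply_eq_smul {z w : ℂ} (hzw : z ≠ w) {v v' : H}
    (hv : T v = z • v) (hv' : T v' = w • v') : ⟪v, v'⟫_ℂ = 0 := by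
  have hnormal : IsStarNormal (T - z • 1) := by
    have hcomm : Commute T (star (z • 1)) := by
      rw [star_smul, star_one]
      exact (Commute.one_right T).smul_right _
    exact hcomm.isStarNormal_sub
  have hker : v ∈ (T - z • 1).rangeᗮ := by
    rw [ContinuousLinearMap.IsStarNormal.orthogonal_range hnormal, LinearMap.mem_ker]
    exact sub_eq_zero.2 hv
  have hv'z : (T - z • 1) v' = (w - z) • v' := by
    rw [sub_smul, ← hv']
    rfl
  have horth : ⟪v, (T - z • 1) v'⟫_ℂ = 0 :=
    Submodule.inner_left_of_mem_orthogonal (LinearMap.mem_range_self _ v') hker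
  rw [hv'z, inner_smul_right] at horth
  exact (mul_eq_zero.1 horth).resolve_left (sub_ne_zero.2 hzw.symm)

theorem exists_inner_pow_eq_half_add (hT : (spectrum ℂ T).Finite) {z w : ℂ} (hzw : z ≠ w)
    (hz : z ∈ spectrum ℂ T) (hw : w ∈ spectrum ℂ T) :
    ∃ χ : H, ‖χ‖ = 1 ∧ ∀ n : ℕ, ⟪χ, (T ^ n) χ⟫_ℂ = (z ^ n + w ^ n) / 2 := by
  obtain ⟨v, hv, hTv⟩ := exists_unit_eigenvector hT hz
  obtain ⟨v', hv', hTv'⟩ := exists_unit_eigenvector hT hw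
  have hvv' := inner_eq_zero_of_apply_eq_smul hzw hTv hTv'
  have hv'v := inner_eq_zero_of_apply_eq_smul hzw.symm hTv' hTv
  have hsqrt : ((√2 : ℝ) : ℂ)⁻¹ * ((√2 : ℝ) : ℂ)⁻¹ = 1 / 2 := by
    rw [← mul_inv, ← Complex.ofReal_mul, Real.mul_self_sqrt zero_le_two, one_div,
      Complex.ofReal_ofNat]
  let χ := ((√2 : ℝ) : ℂ)⁻¹ • (v + v')
  have hinner (n : ℕ) : ⟪χ, (T ^ n) χ⟫_ℂ = (z ^ n + w ^ n) / 2 := by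
    simp only [χ, map_smul, map_add, pow_apply_of_apply_eq_smul hTv,
      pow_apply_of_apply_eq_smul hTv', inner_smul_left, inner_smul_right, inner_add_left,
      inner_add_right, hvv', hv'v, inner_self_eq_norm_sq_to_K, hv, hv', map_inv₀,
      Complex.conj_ofReal, RCLike.ofReal_one]
    linear_combination (z ^ n + w ^ n) * hsqrt
  refine ⟨χ, ?_, hinner⟩
  have hsq : (‖χ‖ : ℂ) ^ 2 = 1 := by
    simpa [inner_self_eq_norm_sq_to_K] using hinner 0
  exact (pow_eq_one_iff_of_nonneg (norm_nonneg χ) two_ne_zero).1 (mod_cast hsq)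

theorem exists_one_sub_sq_norm_inner_pow_eq (hT : (spectrum ℂ T).Finite) {α β : Real.Angle}
    (hαβ : α ≠ β) (hα : (α.toCircle : ℂ) ∈ spectrum ℂ T) (hβ : (β.toCircle : ℂ) ∈ spectrum ℂ T) :
    ∃ χ : H, ‖χ‖ = 1 ∧
      ∀ n : ℕ, 1 - ‖⟪χ, (T ^ n) χ⟫_ℂ‖ ^ 2 = (1 - Real.cos (n * ‖α - β‖)) / 2 := by
  have hne : (α.toCircle : ℂ) ≠ β.toCircle :=
    fun h => hαβ (toCircle_angle_injective (Circle.coe_injective h))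
  obtain ⟨χ, hχ, hpow⟩ := exists_inner_pow_eq_half_add hT hne hα hβ
  refine ⟨χ, hχ, fun n => ?_⟩
  rw [hpow, ← Circle.coe_pow, ← Circle.coe_pow, ← toCircle_nsmul_angle, ← toCircle_nsmul_angle,
    sq_norm_toCircle_add_toCircle_div_two, ← smul_sub, cos_nsmul_eq_cos_mul_norm]
  ring

end NormalOperators

section Recurrence

theorem exists_nat_mul_mem_Ioc {K : Type*} [Field K] [LinearOrder K] [IsStrictOrderedRing K]
    [FloorSemiring K] {a c : K} (ha : 0 < a) (hac : a ≤ c) :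
    ∃ n : ℕ, 0 < n ∧ n * a ∈ Set.Ioc (c / 2) c := by
  have hpos : 0 < ⌊c / a⌋₊ := Nat.floor_pos.2 ((one_le_div ha).2 hac)
  have hle : ⌊c / a⌋₊ * a ≤ c :=
    (le_div_iff₀ ha).1 (Nat.floor_le (div_nonneg (ha.le.trans hac) ha.le))
  have hlt : c < (⌊c / a⌋₊ + 1) * a := (div_lt_iff₀ ha).1 (Nat.lt_floor_add_one _)
  have hone : (1 : K) ≤ ⌊c / a⌋₊ := mod_cast hpos
  refine ⟨_, hpos, ?_, hle⟩
  nlinarith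

theorem exists_norm_sub_eq_iSup {E κ : Type*} [NormedAddCommGroup E] [Finite κ] [Nontrivial κ]
    {φ : κ → E} (hφ : Function.Injective φ) :
    ∃ j k, φ j ≠ φ k ∧ ‖φ j - φ k‖ = ⨆ p : κ × κ, ‖φ p.1 - φ p.2‖ := by
  obtain ⟨⟨j, k⟩, hjk⟩ := exists_eq_ciSup_of_finite (f := fun p : κ × κ => ‖φ p.1 - φ p.2‖)
  obtain ⟨a, b, hab⟩ := exists_pair_ne κ
  refine ⟨j, k, sub_ne_zero.1 (norm_pos_iff.1 ?_), hjk⟩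
  calc 0 < ‖φ a - φ b‖ := norm_sub_pos_iff.2 (hφ.ne hab)
    _ ≤ ⨆ p : κ × κ, ‖φ p.1 - φ p.2‖ :=
      le_ciSup (f := fun p : κ × κ => ‖φ p.1 - φ p.2‖) (Set.finite_range _).bddAbove (a, b)
    _ = ‖φ j - φ k‖ := hjk.symm

variable {H : Type*} [NormedAddCommGroup H] [InnerProductSpace ℂ H] [CompleteSpace H]

theorem recurrence_time_unitary_polytope_general {κ : Type*} [Fintype κ] [Nontrivial κ]
    {U : H →L[ℂ] H} (hU : U ∈ unitary (H →L[ℂ] H)) {φ : κ → Real.Angle}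
    (hφ : Function.Injective φ)
    (hspec : spectrum ℂ U = Set.range fun k => ((φ k).toCircle : ℂ)) {ε : ℝ} (hε : 0 < ε)
    (hε2 : ε ^ 2 ≤ 1 / 2) :
    ∃ m : ℕ, 0 < m ∧
      (m : ℝ) ≤ (π / ⨆ p : κ × κ, ‖φ p.1 - φ p.2‖) * (1 / (Fintype.card κ : ℝ)) *
        (2 * ⌈π / ε⌉ + 2 : ℝ) ^ (Fintype.card κ - 1) ∧
      (∀ ψ : H, ‖ψ‖ = 1 → 1 - ‖⟪ψ, (U ^ m) ψ⟫_ℂ‖ ^ 2 ≤ ε ^ 2) ∧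
      ∃ χ : H, ‖χ‖ = 1 ∧ ∃ m' : ℕ, 0 < m' ∧ m' ≤ m ∧
        1 - ‖⟪χ, (U ^ m') χ⟫_ℂ‖ ^ 2 > ε ^ 2 := by
  have hnormal (n : ℕ) : IsStarNormal (U ^ n) := isStarNormal_of_mem_unitary (pow_mem hU n)
  have : IsStarNormal U := isStarNormal_of_mem_unitary hU
  obtain ⟨j, k, hjk, hΔ⟩ := exists_norm_sub_eq_iSup hφ
  rw [← hΔ]
  have hpos : 0 < ‖φ j - φ k‖ := norm_sub_pos_iff.2 hjk
  obtain ⟨M, hM, hMlt, hMle⟩ := exists_nat_mul_mem_Ioc hpos (norm_angle_le_pi _)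
  obtain ⟨m, hm, hmle, τ, hτ⟩ := exists_norm_nsmul_angle_sub_le hε fun i => M • φ i
  refine ⟨m * M, Nat.mul_pos hm hM, ?_, fun ψ hψ => ?_, ?_⟩
  · rw [mul_assoc, mul_comm m, Nat.cast_mul]
    exact mul_le_mul ((le_div_iff₀ hpos).2 hMle) hmle (by positivity) (by positivity)
  · refine one_sub_sq_norm_inner_le_sq_of_spectrum_subset_arc (τ := τ) hε.le
      (by nlinarith [pi_gt_three]) ?_ hψ
    rw [spectrum.map_pow_of_pos U (Nat.mul_pos hm hM), hspec]
    rintro _ ⟨_, ⟨i, rfl⟩, rfl⟩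
    refine ⟨(m * M) • φ i, mul_nsmul' (φ i) m M ▸ hτ i, ?_⟩
    rw [toCircle_nsmul_angle, Circle.coe_pow]
  · obtain ⟨χ, hχ, hχM⟩ := exists_one_sub_sq_norm_inner_pow_eq
      (hspec ▸ Set.finite_range _) hjk (hspec ▸ ⟨j, rfl⟩) (hspec ▸ ⟨k, rfl⟩)
    refine ⟨χ, hχ, M, hM, Nat.le_mul_of_pos_left M hm, ?_⟩
    have hcos := cos_neg_of_pi_div_two_lt_of_lt hMlt (by linarith [pi_pos])
    rw [hχM]
    linarith

end Recurrence

section Matrix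

variable {𝕜 n : Type*} [RCLike 𝕜] [Fintype n]

theorem star_dotProduct_mulVec_eq_inner [DecidableEq n] (A : Matrix n n 𝕜) (ψ : n → 𝕜) :
    star ψ ⬝ᵥ A *ᵥ ψ =
      ⟪WithLp.toLp 2 ψ, toEuclideanCLM (𝕜 := 𝕜) A (WithLp.toLp 2 ψ)⟫_𝕜 := by
  rw [toEuclideanCLM_toLp, EuclideanSpace.inner_toLp_toLp, dotProduct_comm]

theorem star_dotProduct_self_eq_one_iff {ψ : n → 𝕜} :
    star ψ ⬝ᵥ ψ = 1 ↔ ‖WithLp.toLp 2 ψ‖ = 1 := by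
  rw [dotProduct_comm, ← EuclideanSpace.inner_toLp_toLp, inner_self_eq_norm_sq_to_K,
    ← RCLike.ofReal_pow, ← RCLike.ofReal_one, RCLike.ofReal_inj,
    pow_eq_one_iff_of_nonneg (norm_nonneg _) two_ne_zero]

end Matrix

theorem recurrence_time_unitary_polytope
    (D d : ℕ) (hd : 2 ≤ d) (U : Matrix (Fin D) (Fin D) ℂ)
    (hU : U ∈ Matrix.unitaryGroup (Fin D) ℂ)
    (φ : Fin d → ℝ) (hφ : ∀ k, 0 ≤ φ k ∧ φ k < 2 * π)
    (hφinj : Function.Injective φ)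
    (hspec : spectrum ℂ U = Set.range (fun k => Complex.exp (Complex.I * φ k)))
    (ε : ℝ) (hε0 : 0 < ε) (hε1 : ε ≤ 1 / 2) :
    ∃ mr : ℕ, 0 < mr ∧
      (mr : ℝ) ≤ (π / ⨆ p : Fin d × Fin d, min |φ p.1 - φ p.2| (2 * π - |φ p.1 - φ p.2|)) *
        (1 / (d : ℝ)) * (2 * ⌈π / ε⌉ + 2 : ℝ) ^ (d - 1) ∧
      (∀ ψ : Fin D → ℂ, star ψ ⬝ᵥ ψ = 1 →
        1 - ‖star ψ ⬝ᵥ ((U ^ mr) *ᵥ ψ)‖ ^ 2 ≤ ε ^ 2) ∧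
      (∃ χ : Fin D → ℂ, star χ ⬝ᵥ χ = 1 ∧ ∃ m' : ℕ, 0 < m' ∧ m' ≤ mr ∧
        1 - ‖star χ ⬝ᵥ ((U ^ m') *ᵥ χ)‖ ^ 2 > ε ^ 2) := by
  have hinj : Function.Injective fun k => (φ k : Real.Angle) := fun j k hjk =>
    hφinj (injOn_coe_angle_Ico (hφ j) (hφ k) hjk)
  have hspec' : spectrum ℂ (toEuclideanCLM (𝕜 := ℂ) U) =
      Set.range fun k => ((φ k : Real.Angle).toCircle : ℂ) := by
    simp only [AlgEquiv.spectrum_eq, hspec, exp_I_mul_eq_toCircle]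
  have : Nontrivial (Fin d) := Fin.nontrivial_iff_two_le.2 hd
  obtain ⟨m, hm, hle, hrec, χ, hχ, m', hm', hm'm, hesc⟩ :=
    recurrence_time_unitary_polytope_general (Unitary.map_mem toEuclideanCLM hU) hinj hspec' hε0
      (by nlinarith)
  simp only [norm_coe_angle_sub_eq_min (hφ _) (hφ _), Fintype.card_fin] at hle
  simp only [star_dotProduct_mulVec_eq_inner, star_dotProduct_self_eq_one_iff, map_pow]
  exact ⟨m, hm, hle, fun ψ hψ => hrec _ hψ, χ.ofLp, hχ, m', hm', hm'm, hesc⟩
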